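/- Let G be a finite simple graph with node set N and edge set E. Then the minimum of #_M(Q) over all MultiSLPs Q equivalent to P_G equals 3·|E| + 8·|N| + τ(G), where τ(G) is the minimum vertex cover number of G. Consequently, for the #_M-minimum MultiSLP Q equivalent to P_G, the number k := #_M(Q) − 3·|E| − 8·|N| is the size of a smallest vertex cover of G. -/

import Mathlib

/-- Terms of a MultiSLP over a set of constants `C`:
either a constant, or a variable referenced by its statement index. -/
inductive Term (C : Type) where
  | const : C → Term C
  | var : ℕ → Term C
  deriving DecidableEq

/-- A MultiSLP over the constants `C`: a sequence of statements
`v_i ← ⊕(t_{i,1},…,t_{i,n_i})` (statement `i` defines variable `i`, each `n_i ≥ 2`,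
and every variable used in statement `i` has index `< i`), followed by a return
list of terms whose variables are all defined. -/
structure MultiSLP (C : Type) where
  stmts : List (List (Term C))
  ret : List (Term C)
  arity : ∀ args ∈ stmts, 2 ≤ args.length
  wfStmts : ∀ i, i < stmts.length → ∀ t ∈ stmts.getD i [], ∀ j, t = Term.var j → j < i
  wfRet : ∀ t ∈ ret, ∀ j, t = Term.var j → j < stmts.length

/-- The value of a constant `c` is the standard basis vector `e_c` of `GF(2)^C`. -/
def eConst {C : Type} [DecidableEq C] (c : C) : C → ZMod 2 := fun d => if d = c then 1 else 0

/-- Value of a term, given the list of values of the previously defined variables. -/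
def Term.eval {C : Type} [DecidableEq C] (env : List (C → ZMod 2)) : Term C → (C → ZMod 2)
  | .const c => eConst c
  | .var j => env.getD j 0

/-- Values of the variables of a MultiSLP: the value of variable `i` is the GF(2)-sum
(XOR) of the values of the arguments of statement `i`. -/
def MultiSLP.envList {C : Type} [DecidableEq C] (P : MultiSLP C) : List (C → ZMod 2) :=
  P.stmts.foldl (fun env args => env ++ [(args.map (Term.eval env)).sum]) []

/-- The result of a MultiSLP: the tuple of values of its returned terms. -/
def MultiSLP.result {C : Type} [DecidableEq C] (P : MultiSLP C) : List (C → ZMod 2) :=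
  P.ret.map (Term.eval P.envList)

/-- The value of variable `i` of a MultiSLP. -/
def MultiSLP.value {C : Type} [DecidableEq C] (P : MultiSLP C) (i : ℕ) : C → ZMod 2 :=
  P.envList.getD i 0

/-- The memory-access cost `#_M(P) = Σ_i (n_i + 1)`. -/
def MultiSLP.costM {C : Type} (P : MultiSLP C) : ℕ :=
  (P.stmts.map fun args => args.length + 1).sum
/-- The constants used by `P_G`: the fresh constant `ρ`, the nodes of `G`,
and for each node `a` the fresh local nodes `λ_a` and `μ_a`. -/
inductive Const (N : Type) where
  | rho : Const N
  | node : N → Const N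
  | lam : N → Const N
  | mu : N → Const N
  deriving DecidableEq

/-- The result of `P_G`: the family of values `e_ρ + e_x + e_y` indexed by the
edges of `G_modif` (first the edges of `G`, enumerated by the list `L`, then for
each node `a` — enumerated by `nodes` — the two local edges `(a,λ_a)` and `(a,μ_a)`).
A MultiSLP `Q` is equivalent to `P_G` iff `Q.result = targetValues L nodes`. -/
def targetValues {N : Type} [DecidableEq N] (L : List (N × N)) (nodes : List N) :
    List (Const N → ZMod 2) :=
  (L.map fun p =>
    eConst Const.rho + eConst (Const.node p.1) + eConst (Const.node p.2))
  ++ nodes.flatMap fun a =>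
      [eConst Const.rho + eConst (Const.node a) + eConst (Const.lam a),
       eConst Const.rho + eConst (Const.node a) + eConst (Const.mu a)]

/-- The minimum vertex-cover number `τ(G)` of a finite simple graph `G`. -/
noncomputable def tau {N : Type} [Fintype N] [DecidableEq N] (G : SimpleGraph N) : ℕ :=
  sInf {k | ∃ X : Finset N, (∀ a b : N, G.Adj a b → a ∈ X ∨ b ∈ X) ∧ X.card = k}

/-!
For the upper bound, compute `e_ρ + e_a` at cost 3 for every `a` in a minimum vertex cover `X`. Each
edge of `G`, and both local edges of every `a ∈ X`, then have goals of cost 3, and the remaining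
local edges have goals of cost 4.

For the lower bound, let `Q` be equivalent to `P_G`, and call the variables of `Q` other than one
chosen variable for each goal auxiliary. Two estimates are added up.

* Contract `ρ` and all local nodes to one point and go through the statements, identifying further
  constants until the current value is a multiple of a basis vector. An auxiliary statement with `n`
  arguments costs at most `n - 1` identifications. The goal of a local edge costs none. The goal of
  an edge of `G` costs at most `n - 2`: it is a sum of three basis vectors, so one identification
  suffices, and if `n = 2` then it is a sum of two multiples of basis vectors and has odd parity, so
  one of them vanishes. Afterwards `ρ`, `a`, `b` are not all distinct for any edge `ab` of `G`.
  Choosing representatives of the classes, with `ρ` among them, the nodes not chosen form a vertex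
  cover, so `τ(G)` is at most the number of identifications.
* If the goal of the local edge of `a` towards `λ_a` has two arguments, then by parity one of them
  is auxiliary. Adding the other one when it is not auxiliary turns these goals into linearly
  independent vectors spanned by the values of the auxiliary variables, so at most as many of them
  are binary as there are auxiliary variables. The same holds for the `μ_a`. These two savings are
  paid for by the excess of the cost `n + 1` of an auxiliary statement over `n - 1`.
-/

namespace MultiSLP

variable {C : Type}

/-- The argument list of statement `i`, with the junk value `[]` past the end. -/
def args (Q : MultiSLP C) (i : ℕ) : List (Term C) := Q.stmts.getD i []

lemma args_eq_getElem (Q : MultiSLP C) {i : ℕ} (hi : i < Q.stmts.length) :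
    Q.args i = Q.stmts[i] :=
  List.getD_eq_getElem _ _ hi

lemma two_le_length_args (Q : MultiSLP C) {i : ℕ} (hi : i < Q.stmts.length) :
    2 ≤ (Q.args i).length := by
  rw [Q.args_eq_getElem hi]
  exact Q.arity _ (List.getElem_mem hi)

lemma lt_of_var_mem_args (Q : MultiSLP C) {i j : ℕ} (hi : i < Q.stmts.length)
    (hj : Term.var j ∈ Q.args i) : j < i :=
  Q.wfStmts i hi _ hj j rfl

lemma costM_eq_sum (Q : MultiSLP C) :
    Q.costM = ∑ i ∈ Finset.range Q.stmts.length, ((Q.args i).length + 1) := by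
  rw [costM, Finset.sum_range, ← Fin.sum_univ_fun_getElem]
  exact Finset.sum_congr rfl fun i _ => by rw [Q.args_eq_getElem i.2]

variable [DecidableEq C]

/-- One evaluation step: append the value of the next statement to the environment. -/
def extendEnv (env : List (C → ZMod 2)) (args : List (Term C)) : List (C → ZMod 2) :=
  env ++ [(args.map (Term.eval env)).sum]

lemma prefix_foldl_extendEnv (stmts : List (List (Term C))) (env : List (C → ZMod 2)) :
    env <+: stmts.foldl extendEnv env := by
  induction stmts generalizing env with
  | nil => exact List.prefix_rfl
  | cons args _ ih => exact (List.prefix_append _ _).trans (ih (extendEnv env args))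

lemma length_foldl_extendEnv (stmts : List (List (Term C))) (env : List (C → ZMod 2)) :
    (stmts.foldl extendEnv env).length = env.length + stmts.length := by
  induction stmts generalizing env with
  | nil => rfl
  | cons args _ ih =>
    rw [List.foldl_cons, ih, extendEnv, List.length_append, List.length_singleton,
      List.length_cons, Nat.add_right_comm, Nat.add_assoc]

lemma foldl_take_prefix_envList (Q : MultiSLP C) (i : ℕ) :
    (Q.stmts.take i).foldl extendEnv [] <+: Q.envList := by
  have h : Q.envList = (Q.stmts.drop i).foldl extendEnv ((Q.stmts.take i).foldl extendEnv []) := by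
    rw [← List.foldl_append, List.take_append_drop]
    rfl
  exact h ▸ prefix_foldl_extendEnv _ _

lemma value_eq_getD_of_prefix (Q : MultiSLP C) {env : List (C → ZMod 2)} (h : env <+: Q.envList)
    {i : ℕ} (hi : i < env.length) : Q.value i = env.getD i 0 := by
  obtain ⟨rest, hrest⟩ := h
  rw [value, ← hrest, List.getD_append _ _ _ _ hi]

/-- The value of a term in the final environment. -/
def termValue (Q : MultiSLP C) : Term C → C → ZMod 2 := Term.eval Q.envList

@[simp]
lemma termValue_const (Q : MultiSLP C) (c : C) : Q.termValue (.const c) = eConst c := rfl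

@[simp]
lemma termValue_var (Q : MultiSLP C) (j : ℕ) : Q.termValue (.var j) = Q.value j := rfl

lemma value_eq_sum (Q : MultiSLP C) {i : ℕ} (hi : i < Q.stmts.length) :
    Q.value i = ((Q.args i).map Q.termValue).sum := by
  let env := (Q.stmts.take i).foldl extendEnv []
  have hlen : env.length = i := by
    rw [length_foldl_extendEnv, List.length_take_of_le hi.le, List.length_nil, Nat.zero_add]
  have hstep : (Q.stmts.take (i + 1)).foldl extendEnv [] = extendEnv env (Q.args i) := by
    rw [List.take_succ_eq_append_getElem hi, List.foldl_concat, Q.args_eq_getElem hi]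
  have hval : Q.value i = ((Q.args i).map (Term.eval env)).sum := by
    rw [Q.value_eq_getD_of_prefix (hstep ▸ Q.foldl_take_prefix_envList (i + 1))
      (by simp [extendEnv, hlen]), extendEnv, List.getD_append_right _ _ _ _ hlen.le]
    simp [hlen]
  rw [hval]
  congr 1
  refine List.map_congr_left fun t ht => ?_
  cases t with
  | const c => rfl
  | var j =>
    have hj : j < env.length := hlen.symm ▸ Q.lt_of_var_mem_args hi ht
    exact (Q.value_eq_getD_of_prefix (Q.foldl_take_prefix_envList i) hj).symm

end MultiSLP

section FactoredProgram

variable {C : Type} [DecidableEq C]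

/-- The statement computing `e_ρ + e_x + e_y` for `p = (x, y)` in the presence of variables holding
`e_ρ + e_c` for the entries `c` of `cs`; variable `i` belongs to `cs[i]`. -/
def factoredArgs (ρ : C) (cs : List C) (p : C × C) : List (Term C) :=
  if p.1 ∈ cs then [.var (cs.idxOf p.1), .const p.2]
  else if p.2 ∈ cs then [.var (cs.idxOf p.2), .const p.1]
  else [.const ρ, .const p.1, .const p.2]

lemma lt_of_var_mem_factoredArgs {ρ : C} {cs : List C} {p : C × C} {j : ℕ}
    (hj : Term.var j ∈ factoredArgs ρ cs p) : j < cs.length := by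
  unfold factoredArgs at hj
  split_ifs at hj with h₁ h₂
  · obtain rfl : j = _ := by simpa using hj
    exact List.idxOf_lt_length_of_mem h₁
  · obtain rfl : j = _ := by simpa using hj
    exact List.idxOf_lt_length_of_mem h₂
  · simp at hj

/-- The program computing `e_ρ + e_x + e_y` for all `(x, y)` in `pairs` after factoring out
`e_ρ + e_c` for all `c` in `cs`. -/
def factoredProgram (ρ : C) (cs : List C) (pairs : List (C × C)) : MultiSLP C where
  stmts := cs.map (fun c => [.const ρ, .const c]) ++ pairs.map (factoredArgs ρ cs)
  ret := (List.range pairs.length).map fun i => .var (cs.length + i)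
  arity := by
    simp only [List.mem_append, List.mem_map, factoredArgs]
    rintro _ (⟨c, -, rfl⟩ | ⟨p, -, rfl⟩)
    · simp
    · split_ifs <;> simp
  wfStmts := by
    rintro i hi _ ht j rfl
    rw [List.getD_eq_getElem _ _ hi, List.getElem_append] at ht
    split_ifs at ht with h
    · simp at ht
    · rw [List.getElem_map] at ht
      rw [List.length_map, not_lt] at h
      exact (lt_of_var_mem_factoredArgs ht).trans_le h
  wfRet := by
    simp

variable (ρ : C) (cs : List C) (pairs : List (C × C))

lemma value_factoredProgram_of_lt {i : ℕ} (hi : i < cs.length) :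
    (factoredProgram ρ cs pairs).value i = eConst ρ + eConst cs[i] := by
  have hi' : i < (factoredProgram ρ cs pairs).stmts.length := by
    simp only [factoredProgram, List.length_append, List.length_map]
    exact Nat.lt_add_right _ hi
  rw [MultiSLP.value_eq_sum _ hi', MultiSLP.args_eq_getElem _ hi']
  simp [factoredProgram, hi]

lemma sum_termValue_factoredArgs (p : C × C) :
    ((factoredArgs ρ cs p).map (factoredProgram ρ cs pairs).termValue).sum =
      eConst ρ + eConst p.1 + eConst p.2 := by
  have value_idxOf {c : C} (hc : c ∈ cs) :
      (factoredProgram ρ cs pairs).value (cs.idxOf c) = eConst ρ + eConst c := by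
    rw [value_factoredProgram_of_lt _ _ _ (List.idxOf_lt_length_of_mem hc), List.getElem_idxOf]
  unfold factoredArgs
  split_ifs with h₁ h₂
  · simp [value_idxOf h₁]
  · simp [value_idxOf h₂, add_right_comm]
  · simp [add_assoc]

lemma value_factoredProgram_add {i : ℕ} (hi : i < pairs.length) :
    (factoredProgram ρ cs pairs).value (cs.length + i) =
      eConst ρ + eConst pairs[i].1 + eConst pairs[i].2 := by
  have hi' : cs.length + i < (factoredProgram ρ cs pairs).stmts.length := by
    simpa [factoredProgram] using hi
  rw [MultiSLP.value_eq_sum _ hi', MultiSLP.args_eq_getElem _ hi',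
    ← sum_termValue_factoredArgs ρ cs pairs]
  simp [factoredProgram]

lemma result_factoredProgram :
    (factoredProgram ρ cs pairs).result =
      pairs.map fun p => eConst ρ + eConst p.1 + eConst p.2 := by
  refine List.ext_getElem (by simp [MultiSLP.result, factoredProgram]) fun i _ hi => ?_
  rw [List.getElem_map, ← value_factoredProgram_add ρ cs pairs (by simpa using hi)]
  simp [MultiSLP.result, factoredProgram, Term.eval, MultiSLP.value]

lemma costM_factoredProgram :
    (factoredProgram ρ cs pairs).costM =
      3 * cs.length + (pairs.map fun p => if p.1 ∈ cs ∨ p.2 ∈ cs then 3 else 4).sum := by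
  have hargs (p : C × C) :
      (factoredArgs ρ cs p).length + 1 = if p.1 ∈ cs ∨ p.2 ∈ cs then 3 else 4 := by
    unfold factoredArgs
    split_ifs <;> simp_all
  simp [MultiSLP.costM, factoredProgram, Function.comp_def, hargs, mul_comm]

end FactoredProgram

section VertexCover

variable {N : Type} [Fintype N] [DecidableEq N]

lemma tau_le_card {G : SimpleGraph N} {X : Finset N} (hX : ∀ a b, G.Adj a b → a ∈ X ∨ b ∈ X) :
    tau G ≤ X.card :=
  Nat.sInf_le ⟨X, hX, rfl⟩

lemma exists_cover_card_eq_tau (G : SimpleGraph N) :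
    ∃ X : Finset N, (∀ a b, G.Adj a b → a ∈ X ∨ b ∈ X) ∧ X.card = tau G :=
  Nat.sInf_mem (s := {k | ∃ X : Finset N, (∀ a b, G.Adj a b → a ∈ X ∨ b ∈ X) ∧ X.card = k})
    ⟨_, Finset.univ, fun a _ _ => .inl (Finset.mem_univ a), rfl⟩

end VertexCover

section UpperBound

variable {N : Type}

/-- The edges of `G_modif` as ordered pairs, listed in the order of `targetValues`. -/
def targetPairs (L : List (N × N)) (nodes : List N) : List (Const N × Const N) :=
  L.map (Prod.map .node .node) ++
    nodes.flatMap fun a => [(.node a, .lam a), (.node a, .mu a)]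

variable [DecidableEq N]

lemma targetValues_eq_map (L : List (N × N)) (nodes : List N) :
    targetValues L nodes =
      (targetPairs L nodes).map fun p => eConst .rho + eConst p.1 + eConst p.2 := by
  simp [targetValues, targetPairs, Function.comp_def, List.map_flatMap]

variable [Fintype N]

lemma costM_factoredProgram_of_cover {X : Finset N} {L : List (N × N)} {nodes : List N}
    (hL : ∀ p ∈ L, p.1 ∈ X ∨ p.2 ∈ X) (hnodup : nodes.Nodup) (hnodes : ∀ a, a ∈ nodes) :
    (factoredProgram .rho (X.toList.map .node) (targetPairs L nodes)).costM =
      3 * L.length + 8 * Fintype.card N + X.card := by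
  have hedges : (L.map fun p => if p.1 ∈ X ∨ p.2 ∈ X then 3 else 4).sum = 3 * L.length := by
    rw [List.map_congr_left fun p hp => if_pos (hL p hp)]
    simp [mul_comm]
  have hlocal : (nodes.map fun a => if a ∈ X then 6 else 8).sum + 2 * X.card =
      8 * Fintype.card N := by
    have huniv : nodes.toFinset = Finset.univ := by
      ext a
      simp [hnodes]
    have hX : 2 * X.card = ∑ a, if a ∈ X then 2 else 0 := by
      simp [mul_comm]
    rw [← List.sum_toFinset _ hnodup, huniv, hX, ← Finset.sum_add_distrib, mul_comm,
      ← smul_eq_mul, ← Finset.card_univ, ← Finset.sum_const]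
    exact Finset.sum_congr rfl fun a _ => by split_ifs <;> rfl
  have hpair (a : N) : (if a ∈ X then 3 else 4) + (if a ∈ X then 3 else 4) =
      if a ∈ X then 6 else 8 := by
    split_ifs <;> rfl
  have hcost : (factoredProgram .rho (X.toList.map .node) (targetPairs L nodes)).costM =
      3 * X.card + ((L.map fun p => if p.1 ∈ X ∨ p.2 ∈ X then 3 else 4).sum +
        (nodes.map fun a => if a ∈ X then 6 else 8).sum) := by
    simp [costM_factoredProgram, targetPairs, Function.comp_def, List.flatMap_def,
      List.sum_flatten, hpair]
  omega

lemma exists_costM_eq (G : SimpleGraph N) {L : List (N × N)} {nodes : List N}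
    (hL : ∀ p ∈ L, G.Adj p.1 p.2) (hnodup : nodes.Nodup) (hnodes : ∀ a, a ∈ nodes) :
    ∃ Q : MultiSLP (Const N), Q.result = targetValues L nodes ∧
      Q.costM = 3 * L.length + 8 * Fintype.card N + tau G := by
  obtain ⟨X, hX, hcard⟩ := exists_cover_card_eq_tau G
  refine ⟨factoredProgram .rho (X.toList.map .node) (targetPairs L nodes), ?_, ?_⟩
  · rw [targetValues_eq_map, result_factoredProgram]
  · rw [← hcard]
    exact costM_factoredProgram_of_cover (fun p hp => hX _ _ (hL p hp)) hnodup hnodes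

end UpperBound

section Loss

open Finset

variable {C D E : Type*} [DecidableEq E]

/-- Applying `h` decreases the cardinality of a finite set by at most `w`. -/
def LossLE (h : D → E) (w : ℕ) : Prop := ∀ I : Finset D, #I ≤ #(I.image h) + w

lemma LossLE.mono {h : D → E} {v w : ℕ} (hh : LossLE h v) (hvw : v ≤ w) : LossLE h w :=
  fun I => (hh I).trans (Nat.add_le_add_left hvw _)

variable [DecidableEq D]

lemma lossLE_id : LossLE (id : D → D) 0 := fun I => by rw [image_id, Nat.add_zero]

lemma LossLE.comp {h : D → E} {g : C → D} {v w : ℕ} (hh : LossLE h v) (hg : LossLE g w) :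
    LossLE (h ∘ g) (w + v) := fun I => by
  rw [← image_image]
  have := hg I
  have := hh (I.image g)
  omega

lemma lossLE_update_id (a b : D) : LossLE (Function.update id a b) 1 := fun I => by
  have hsub : I.erase a ⊆ I.image (Function.update id a b) := fun d hd =>
    mem_image.2 ⟨d, mem_of_mem_erase hd, Function.update_of_ne (ne_of_mem_erase hd) _ _⟩
  exact Nat.sub_le_iff_le_add.1 (pred_card_le_card_erase.trans (card_le_card hsub))

end Loss

section Collapse

variable {C D E : Type*} [Finite C] [Finite D] [Finite E]

/-- The linear map `GF(2)^C → GF(2)^D` renaming each constant `c` to `f c`. -/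
noncomputable abbrev push (f : C → D) :
    (C → ZMod 2) →ₗ[ZMod 2] (D → ZMod 2) :=
  FunOnFinite.linearMap (ZMod 2) (ZMod 2) f

lemma push_comp (h : D → E) (f : C → D) (v : C → ZMod 2) :
    push (h ∘ f) v = push h (push f v) := by
  rw [push, FunOnFinite.linearMap_comp, LinearMap.comp_apply]

variable [DecidableEq D] [DecidableEq E]

/-- A scalar multiple of a standard basis vector. -/
def IsMonomial (v : D → ZMod 2) : Prop := ∃ d r, v = Pi.single d r

lemma IsMonomial.push {v : D → ZMod 2} (hv : IsMonomial v) (h : D → E) :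
    IsMonomial (push h v) := by
  obtain ⟨d, r, rfl⟩ := hv
  exact ⟨h d, r, FunOnFinite.linearMap_piSingle _ _ _ _ _⟩

/-- The vector `v` becomes monomial under some renaming of loss at most `w`. -/
def Collapsible (v : D → ZMod 2) (w : ℕ) : Prop :=
  ∃ h : D → D, LossLE h w ∧ IsMonomial (push h v)

lemma Collapsible.mono {v : D → ZMod 2} {w w' : ℕ} (hv : Collapsible v w) (hw : w ≤ w') :
    Collapsible v w' :=
  let ⟨h, hloss, hmono⟩ := hv
  ⟨h, hloss.mono hw, hmono⟩

lemma IsMonomial.collapsible {v : D → ZMod 2} (hv : IsMonomial v) (w : ℕ) : Collapsible v w :=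
  ⟨id, lossLE_id.mono w.zero_le, hv.push id⟩

lemma Collapsible.isMonomial_add {u v : D → ZMod 2} {w : ℕ} (hv : Collapsible v w)
    (hu : IsMonomial u) : Collapsible (u + v) (w + 1) := by
  obtain ⟨h, hloss, a, r, hv'⟩ := hv
  obtain ⟨b, s, hu'⟩ := hu.push h
  refine ⟨Function.update id b a ∘ h, (lossLE_update_id b a).comp hloss, a, s + r, ?_⟩
  have ha : Function.update id b a a = a := by
    rw [Function.update_apply, id, ite_self]
  rw [push_comp, map_add, map_add, hu', hv', FunOnFinite.linearMap_piSingle,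
    FunOnFinite.linearMap_piSingle, Function.update_self, ha, Pi.single_add]

lemma collapsible_sum {l : List (D → ZMod 2)} (hl : l ≠ []) (hmono : ∀ v ∈ l, IsMonomial v) :
    Collapsible l.sum (l.length - 1) := by
  induction l with
  | nil => exact absurd rfl hl
  | cons u l ih =>
    rw [List.forall_mem_cons] at hmono
    rcases eq_or_ne l [] with rfl | hl'
    · rw [List.sum_singleton]
      exact hmono.1.collapsible _
    · rw [List.sum_cons]
      refine ((ih hl' hmono.2).isMonomial_add hmono.1).mono ?_
      have := List.length_pos_of_ne_nil hl'
      rw [List.length_cons]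
      omega

end Collapse

section Parity

variable {D : Type*} [Fintype D]

/-- The parity of the number of nonzero coordinates. -/
def parity : (D → ZMod 2) →ₗ[ZMod 2] ZMod 2 := ∑ d, LinearMap.proj d

variable [DecidableEq D]

lemma parity_single (d : D) (r : ZMod 2) : parity (Pi.single d r) = r := by
  simp [parity]

lemma IsMonomial.add_of_parity {u v : D → ZMod 2} (hu : IsMonomial u) (hv : IsMonomial v)
    (huv : parity (u + v) = 1) : IsMonomial (u + v) := by
  obtain ⟨c, r, rfl⟩ := hu
  obtain ⟨d, s, rfl⟩ := hv
  rw [map_add, parity_single, parity_single] at huv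
  have hrs : r = 0 ∨ s = 0 := by
    revert r s
    decide
  rcases hrs with rfl | rfl
  · exact ⟨d, s, by rw [Pi.single_zero, zero_add]⟩
  · exact ⟨c, r, by rw [Pi.single_zero, add_zero]⟩

end Parity

section BasisVector

variable {C D : Type} [DecidableEq C] [DecidableEq D]

lemma eConst_eq_single (d : D) : eConst d = Pi.single d (1 : ZMod 2) := by
  ext
  simp [eConst, Pi.single_apply]

lemma isMonomial_eConst (d : D) : IsMonomial (eConst d) := ⟨d, 1, eConst_eq_single d⟩

lemma eq_or_eq_or_eq_of_isMonomial {x y z : D}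
    (h : IsMonomial (eConst x + eConst y + eConst z)) : y = z ∨ y = x ∨ z = x := by
  obtain ⟨d, r, h⟩ := h
  by_contra! hne
  obtain ⟨hyz, hyx, hzx⟩ := hne
  have hd {c : D} (hc : (eConst x + eConst y + eConst z) c ≠ 0) : c = d := by
    by_contra hcd
    exact hc (by rw [h, Pi.single_eq_of_ne hcd])
  have hx : x = d := hd (by simp [eConst, hyx.symm, hzx.symm])
  have hy : y = d := hd (by simp [eConst, hyz, hyx])
  exact hyx (hy.trans hx.symm)

lemma push_eConst [Finite C] [Finite D] (f : C → D) (c : C) : push f (eConst c) = eConst (f c) := by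
  rw [eConst_eq_single, eConst_eq_single, FunOnFinite.linearMap_piSingle]

lemma collapsible_eConst_triple [Finite D] (x y z : D) :
    Collapsible (eConst x + eConst y + eConst z) 1 := by
  refine ⟨Function.update id x y, lossLE_update_id x y, ?_⟩
  have hxy : Function.update id x y x = Function.update id x y y := by
    rw [Function.update_self, Function.update_apply, id, ite_self]
  rw [map_add, map_add, push_eConst, push_eConst, push_eConst, hxy, ZModModule.add_self,
    zero_add]
  exact isMonomial_eConst _

lemma parity_eConst [Fintype D] (d : D) : parity (eConst d) = 1 := by
  rw [eConst_eq_single, parity_single]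

lemma parity_eConst_triple [Fintype D] (x y z : D) :
    parity (eConst x + eConst y + eConst z) = 1 := by
  rw [map_add, map_add, parity_eConst, parity_eConst, parity_eConst]
  rfl

lemma collapsible_sum_eq_triple [Finite D] {l : List (D → ZMod 2)} (hl : 2 ≤ l.length)
    (hmono : ∀ v ∈ l, IsMonomial v) {x y z : D} (hsum : l.sum = eConst x + eConst y + eConst z) :
    Collapsible l.sum (l.length - 2) := by
  rcases hl.eq_or_lt with hl | hl
  · have := Fintype.ofFinite D
    obtain ⟨u, v, rfl⟩ := List.length_eq_two.1 hl.symm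
    rw [List.sum_pair] at hsum ⊢
    have hparity : parity (u + v) = 1 := hsum ▸ parity_eConst_triple x y z
    exact (IsMonomial.add_of_parity (hmono u (by simp)) (hmono v (by simp)) hparity).collapsible _
  · rw [hsum]
    exact (collapsible_eConst_triple x y z).mono (by omega)

end BasisVector

section Contraction

open Finset

variable {C D : Type} [DecidableEq C] [Finite C] [DecidableEq D] [Finite D]

lemma MultiSLP.exists_lossLE_isMonomial_push_value (Q : MultiSLP C) (π : C → D) {w : ℕ → ℕ}
    (hw : ∀ i < Q.stmts.length, ∀ h : D → D,
      (∀ t ∈ Q.args i, IsMonomial (push (h ∘ π) (Q.termValue t))) →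
        Collapsible (push (h ∘ π) (Q.value i)) (w i))
    {k : ℕ} (hk : k ≤ Q.stmts.length) :
    ∃ h : D → D, LossLE h (∑ i ∈ range k, w i) ∧
      ∀ i < k, IsMonomial (push (h ∘ π) (Q.value i)) := by
  induction k with
  | zero => exact ⟨id, lossLE_id, fun i hi => absurd hi i.not_lt_zero⟩
  | succ k ih =>
    obtain ⟨h, hloss, hmono⟩ := ih (Nat.le_of_succ_le hk)
    have hargs : ∀ t ∈ Q.args k, IsMonomial (push (h ∘ π) (Q.termValue t)) := by
      rintro (c | j) ht
      · rw [termValue_const, push_eConst]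
        exact isMonomial_eConst _
      · exact hmono j (Q.lt_of_var_mem_args hk ht)
    obtain ⟨g, hgloss, hgmono⟩ := hw k hk h hargs
    refine ⟨g ∘ h, ?_, fun i hi => ?_⟩
    · rw [sum_range_succ]
      exact hgloss.comp hloss
    · rw [Function.comp_assoc, push_comp]
      rcases Nat.lt_succ_iff_lt_or_eq.1 hi with hi | rfl
      · exact (hmono i hi).push g
      · exact hgmono

end Contraction

section CoverOfRenaming

open Finset

lemma tau_le_of_lossLE {N D : Type} [Fintype N] [DecidableEq N] [DecidableEq D]
    {G : SimpleGraph N} {h : Option N → D} {w : ℕ} (hloss : LossLE h w)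
    (hadj : ∀ a b, G.Adj a b → h a = h b ∨ h a = h none ∨ h b = h none) : tau G ≤ w := by
  obtain ⟨R, hnone, -, hrange, hinj⟩ :=
    (Set.injOn_singleton h none).exists_subset_injOn_subset_range_eq (Set.subset_univ _)
  rw [Set.singleton_subset_iff] at hnone
  classical
  have hcover : ∀ a b, G.Adj a b → some a ∉ R ∨ some b ∉ R := by
    intro a b hab
    by_contra! hR
    rcases hadj a b hab with h' | h' | h'
    · exact hab.ne (Option.some_injective _ (hinj hR.1 hR.2 h'))
    · exact Option.some_ne_none a (hinj hR.1 hnone h')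
    · exact Option.some_ne_none b (hinj hR.2 hnone h')
  have hcard : #({a | some a ∉ R} : Finset N) ≤ #(univ \ R.toFinset) :=
    card_le_card_of_injOn some (by simp [Set.MapsTo]) (Option.some_injective N).injOn
  have himage : #(univ.image h) = #R.toFinset := by
    rw [← card_image_of_injOn (f := h) (by simpa using hinj)]
    congr 1
    rw [← coe_inj]
    simpa using hrange.symm
  have := hloss univ
  rw [himage, ← card_sdiff_add_card_eq_card (subset_univ R.toFinset)] at this
  exact (tau_le_card (by simpa using hcover)).trans (hcard.trans (by omega))

end CoverOfRenaming

section Independence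

variable {R ι α : Type*} {C : Type*} [Ring R] [DecidableEq ι] [LinearOrder α]

/-- In a nontrivial relation, every `y`-coordinate in the support is cancelled by the perturbation
of some element of the support; counting, these are all its elements, so the `x`-coordinate of
maximal rank cannot be cancelled. -/
lemma linearIndependent_add_of_rank {u v : ι → C → R} {x y : ι → C} (rank : ι → α)
    (hux : ∀ a b, u a (x b) = if a = b then 1 else 0)
    (huy : ∀ a b, u a (y b) = if a = b then 1 else 0)
    (hvy : ∀ a b c, v a (y b) ≠ 0 → v a (y c) ≠ 0 → b = c)
    (hvx : ∀ a b c, v a (y b) ≠ 0 → v a (x c) ≠ 0 → rank c < rank a) :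
    LinearIndependent R fun a => u a + v a := by
  classical
  rw [linearIndependent_iff']
  intro s g hsum
  have hhit {p : C} {b : ι} (hu : ∀ a, u a p = if a = b then 1 else 0) (hb : b ∈ s)
      (hgb : g b ≠ 0) : ∃ a ∈ s.filter (g · ≠ 0), v a p ≠ 0 := by
    by_contra! hzero
    refine hgb ?_
    have hv : ∑ a ∈ s, g a * v a p = 0 := Finset.sum_eq_zero fun a ha => by
      by_cases hga : g a = 0
      · rw [hga, zero_mul]
      · rw [hzero a (Finset.mem_filter.2 ⟨ha, hga⟩), mul_zero]
    have hp := congrFun hsum p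
    simpa [Finset.sum_apply, mul_add, Finset.sum_add_distrib, hu, hv, hb] using hp
  set D := s.filter (g · ≠ 0)
  by_contra! hne
  have hDne : D.Nonempty := hne.imp fun a ha => Finset.mem_filter.2 ha
  have hy : ∀ b ∈ D, ∃ a ∈ D, v a (y b) ≠ 0 := fun b hb =>
    hhit (huy · b) (Finset.mem_filter.1 hb).1 (Finset.mem_filter.1 hb).2
  choose! σ hσD hσ using hy
  have hσsurj : Set.SurjOn σ D D :=
    Finset.surjOn_of_injOn_of_card_le σ hσD
      (fun b hb c hc hbc => hvy _ b c (hσ b hb) (hbc ▸ hσ c hc)) le_rfl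
  obtain ⟨b, hb, hmax⟩ := D.exists_max_image rank hDne
  obtain ⟨a, ha, hab⟩ := hhit (hux · b) (Finset.mem_filter.1 hb).1 (Finset.mem_filter.1 hb).2
  obtain ⟨c, hc, rfl⟩ := hσsurj ha
  exact (hvx _ c b (hσ c hc) hab).not_ge (hmax _ ha)

end Independence

section ModifiedGraph

variable {N : Type}

instance [Fintype N] [DecidableEq N] : Fintype (Const N) where
  elems := {.rho} ∪ Finset.univ.image .node ∪ Finset.univ.image .lam ∪ Finset.univ.image .mu
  complete c := by cases c <;> simp

instance [Finite N] : Finite (Const N) := by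
  classical
  have := Fintype.ofFinite N
  exact Finite.of_fintype _

/-- The two local nodes of `a`: `λ_a` for `false` and `μ_a` for `true`. -/
def localNode : Bool → N → Const N
  | false => .lam
  | true => .mu

lemma localNode_injective (b : Bool) : Function.Injective (localNode b : N → Const N) := by
  intro a c h
  cases b <;> simpa [localNode] using h

lemma localNode_ne_node (b : Bool) (a c : N) : localNode b a ≠ .node c := by
  cases b <;> simp [localNode]

/-- The edges of `G_modif`: those of `G` and the local edges `(a, localNode b a)`, encoded as
`(b, a)`. -/
abbrev ModifEdge (G : SimpleGraph N) : Type := G.edgeSet ⊕ (Bool × N)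

namespace ModifEdge

/-- The local edge `(a, localNode b a)`. -/
abbrev localEdge (G : SimpleGraph N) (b : Bool) (a : N) : ModifEdge G := .inr (b, a)

variable {G : SimpleGraph N}

/-- The endpoints of an edge of `G_modif`. -/
def ends : ModifEdge G → Sym2 (Const N)
  | .inl e => e.1.map .node
  | .inr (b, a) => s(.node a, localNode b a)

lemma rho_notMem_ends (z : ModifEdge G) : .rho ∉ z.ends := by
  rcases z with e | ⟨_ | _, a⟩ <;> simp [ends, localNode]

lemma localNode_mem_ends_iff {b : Bool} {a : N} {z : ModifEdge G} :
    localNode b a ∈ z.ends ↔ z = localEdge G b a := by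
  rcases z with e | ⟨b', a'⟩
  · cases b <;> simp [ends, localNode]
  · cases b <;> cases b' <;> simp [ends, localNode, eq_comm]

lemma ends_injective : Function.Injective (ends : ModifEdge G → Sym2 (Const N)) := by
  have hnode : Function.Injective (Const.node : N → Const N) := fun _ _ h => by simpa using h
  rintro (e | ⟨b, a⟩) (e' | z') h
  · rw [Subtype.ext (Sym2.map.injective hnode h)]
  · exact localNode_mem_ends_iff.1 (h ▸ localNode_mem_ends_iff.2 rfl)
  all_goals exact (localNode_mem_ends_iff.1 (h ▸ localNode_mem_ends_iff.2 rfl)).symm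

lemma node_mem_ends_localEdge_iff {b : Bool} {a c : N} :
    Const.node c ∈ ends (localEdge G b a) ↔ c = a := by
  cases b <;> simp [ends, localNode]

lemma ends_not_isDiag (z : ModifEdge G) : ¬ z.ends.IsDiag := by
  rcases z with ⟨e, he⟩ | ⟨_ | _, a⟩
  · induction e using Sym2.ind with
    | _ a b => simpa [ends] using he.ne
  · simp [ends, localNode]
  · simp [ends, localNode]

variable [DecidableEq N]

/-- The value `e_ρ + e_x + e_y` of the goal variable of an edge `(x, y)` of `G_modif`. -/
def goal (z : ModifEdge G) : Const N → ZMod 2 := fun c => if c = .rho ∨ c ∈ z.ends then 1 else 0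

lemma goal_apply_ne_zero_iff {z : ModifEdge G} {c : Const N} :
    z.goal c ≠ 0 ↔ c = .rho ∨ c ∈ z.ends := by
  unfold goal
  split_ifs with h <;> simp [h]

lemma goal_apply_localNode_ne_zero_iff {z : ModifEdge G} {b : Bool} {a : N} :
    z.goal (localNode b a) ≠ 0 ↔ z = localEdge G b a := by
  have hrho : localNode b a ≠ .rho := by cases b <;> simp [localNode]
  rw [goal_apply_ne_zero_iff, or_iff_right hrho, localNode_mem_ends_iff]

lemma goal_localEdge_apply_node (b : Bool) (a c : N) :
    goal (localEdge G b a) (.node c) = if a = c then 1 else 0 := by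
  simp [goal, node_mem_ends_localEdge_iff, eq_comm]

lemma goal_localEdge_apply_localNode (b : Bool) (a c : N) :
    goal (localEdge G b a) (localNode b c) = if a = c then 1 else 0 := by
  cases b <;> simp [goal, ends, localNode, eq_comm]

lemma goal_injective : Function.Injective (goal : ModifEdge G → Const N → ZMod 2) := by
  intro z z' h
  refine ends_injective (Sym2.ext fun c => ?_)
  rcases eq_or_ne c .rho with rfl | hc
  · exact iff_of_false z.rho_notMem_ends z'.rho_notMem_ends
  · simpa only [goal_apply_ne_zero_iff, hc, false_or] using
      iff_of_eq (congrArg (· c ≠ 0) h)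

lemma goal_eq {z : ModifEdge G} {x y : Const N} (h : z.ends = s(x, y)) :
    z.goal = eConst .rho + eConst x + eConst y := by
  have hxy : x ≠ y := fun hxy => z.ends_not_isDiag (h ▸ hxy)
  have hrho := z.rho_notMem_ends
  rw [h, Sym2.mem_iff, not_or] at hrho
  ext c
  simp only [goal, h, Sym2.mem_iff, eConst, Pi.add_apply]
  split_ifs <;> simp_all

lemma goal_ne_eConst (z : ModifEdge G) (c : Const N) : z.goal ≠ eConst c := by
  intro h
  have hc : ∀ d, d = .rho ∨ d ∈ z.ends → d = c := fun d hd => by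
    simpa [eConst, h] using goal_apply_ne_zero_iff.2 hd
  have hx := hc _ (.inr (Sym2.out_fst_mem z.ends))
  rw [← hc _ (.inl rfl)] at hx
  exact z.rho_notMem_ends (hx ▸ Sym2.out_fst_mem z.ends)

lemma parity_goal [Fintype N] (z : ModifEdge G) : parity z.goal = 1 := by
  obtain ⟨x, y, h⟩ : ∃ x y, z.ends = s(x, y) := Sym2.exists.1 ⟨_, rfl⟩
  rw [goal_eq h, parity_eConst_triple]

lemma goal_mem_targetValues {L : List (N × N)} {nodes : List N} (hnodes : ∀ a, a ∈ nodes)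
    (hL : ∀ a b, G.Adj a b → s(a, b) ∈ L.map fun p => s(p.1, p.2)) (z : ModifEdge G) :
    z.goal ∈ targetValues L nodes := by
  rcases z with ⟨e, he⟩ | ⟨b, a⟩
  · induction e using Sym2.ind with
    | _ a b =>
      obtain ⟨p, hp, hpe⟩ := List.mem_map.1 (hL a b he)
      refine List.mem_append_left _ (List.mem_map.2 ⟨p, hp, (goal_eq ?_).symm⟩)
      exact (congrArg (Sym2.map Const.node) hpe).symm
  · refine List.mem_append_right _ (List.mem_flatMap.2 ⟨a, hnodes a, ?_⟩)
    rw [goal_eq rfl]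
    cases b <;> simp [localNode]

end ModifEdge

end ModifiedGraph

section GoalVariables

open Finset ModifEdge

variable {N : Type} [DecidableEq N] {G : SimpleGraph N} {Q : MultiSLP (Const N)}
  {goalVar : ModifEdge G → ℕ}

/-- Variable `goalVar z` of `Q` holds the goal of `z`, for every edge `z` of `G_modif`. -/
structure ComputesGoals (Q : MultiSLP (Const N)) (goalVar : ModifEdge G → ℕ) : Prop where
  lt_length : ∀ z, goalVar z < Q.stmts.length
  value_eq : ∀ z, Q.value (goalVar z) = z.goal

lemma exists_computesGoals {L : List (N × N)} {nodes : List N} (hnodes : ∀ a, a ∈ nodes)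
    (hL : ∀ a b, G.Adj a b → s(a, b) ∈ L.map fun p => s(p.1, p.2))
    (hQ : Q.result = targetValues L nodes) :
    ∃ goalVar : ModifEdge G → ℕ, ComputesGoals Q goalVar := by
  have hvar : ∀ z : ModifEdge G, ∃ i < Q.stmts.length, Q.value i = z.goal := fun z => by
    have hz := z.goal_mem_targetValues hnodes hL
    rw [← hQ] at hz
    obtain ⟨c | i, ht, hval⟩ := List.mem_map.1 hz
    · exact absurd hval.symm (z.goal_ne_eConst c)
    · exact ⟨i, Q.wfRet _ ht i rfl, hval⟩
  choose goalVar hlt hval using hvar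
  exact ⟨goalVar, hlt, hval⟩

lemma ComputesGoals.injective (hgoal : ComputesGoals Q goalVar) : Function.Injective goalVar :=
  fun z z' h => goal_injective <| by rw [← hgoal.value_eq, ← hgoal.value_eq, h]

/-- A constant, or a goal computed before statement `i`: the value of an argument of statement `i`
which is not an auxiliary variable. -/
def IsDirectValue (goalVar : ModifEdge G → ℕ) (i : ℕ) (v : Const N → ZMod 2) : Prop :=
  (∃ c, v = eConst c) ∨ ∃ z, goalVar z < i ∧ v = z.goal

lemma IsDirectValue.eq_of_apply_localNode_ne_zero {i : ℕ} {v : Const N → ZMod 2}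
    (hv : IsDirectValue goalVar i v) {b : Bool} {a : N} (ha : v (localNode b a) ≠ 0) :
    v = eConst (localNode b a) ∨ goalVar (localEdge G b a) < i ∧ v = (localEdge G b a).goal := by
  rcases hv with ⟨c, rfl⟩ | ⟨z, hz, rfl⟩
  · obtain rfl : localNode b a = c := by simpa [eConst] using ha
    exact .inl rfl
  · obtain rfl := goal_apply_localNode_ne_zero_iff.1 ha
    exact .inr ⟨hz, rfl⟩

lemma linearIndependent_localGoal_add (b : Bool) {B : Finset N} {v : B → Const N → ZMod 2}
    (hv : ∀ a : B, v a = 0 ∨ IsDirectValue goalVar (goalVar (localEdge G b a)) (v a)) :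
    LinearIndependent (ZMod 2)
      fun a : B => (localEdge G b a).goal + v a := by
  have hcases {a c : B} (hc : v a (localNode b c) ≠ 0) :
      v a = eConst (localNode b c.1) ∨
        goalVar (localEdge G b c) < goalVar (localEdge G b a) ∧
          v a = (localEdge G b c).goal := by
    rcases hv a with h | h
    · exact absurd (congrFun h _) hc
    · exact h.eq_of_apply_localNode_ne_zero hc
  refine linearIndependent_add_of_rank (x := fun a => .node a.1) (y := fun a => localNode b a.1)
    (fun a : B => goalVar (localEdge G b a)) ?_ ?_ ?_ ?_
  · simp [goal_localEdge_apply_node]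
  · simp [goal_localEdge_apply_localNode]
  · intro a c d hc hd
    rcases hcases hc with h | ⟨-, h⟩ <;> rw [h] at hd
    · have hdc : d.1 = c.1 := localNode_injective b (by simpa [eConst] using hd)
      exact Subtype.ext hdc.symm
    · simpa [goal_localEdge_apply_localNode] using hd
  · intro a c d hc hd
    rcases hcases hc with h | ⟨hlt, h⟩ <;> rw [h] at hd
    · have hdc : Const.node d.1 = localNode b c.1 := by simpa [eConst] using hd
      exact absurd hdc.symm (localNode_ne_node b c.1 d.1)
    · obtain rfl : c = d := by
        simpa [goal_localEdge_apply_node] using hd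
      exact hlt

variable [Fintype N]

lemma IsDirectValue.parity_eq_one {i : ℕ} {v : Const N → ZMod 2}
    (hv : IsDirectValue goalVar i v) : parity v = 1 := by
  rcases hv with ⟨c, rfl⟩ | ⟨z, -, rfl⟩
  · exact parity_eConst c
  · exact z.parity_goal

variable [DecidableRel G.Adj]

/-- The variables of `Q` other than the chosen goal variables. -/
def auxVars (Q : MultiSLP (Const N)) (goalVar : ModifEdge G → ℕ) : Finset ℕ :=
  range Q.stmts.length \ univ.image goalVar

/-- The subspace spanned by the values of the auxiliary variables. -/
abbrev auxSpan (Q : MultiSLP (Const N)) (goalVar : ModifEdge G → ℕ) :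
    Submodule (ZMod 2) (Const N → ZMod 2) :=
  Submodule.span (ZMod 2) ((auxVars Q goalVar).image Q.value)

namespace ComputesGoals

lemma termValue_mem_auxSpan_or (hgoal : ComputesGoals Q goalVar) {i : ℕ}
    (hi : i < Q.stmts.length) {t : Term (Const N)} (ht : t ∈ Q.args i) :
    Q.termValue t ∈ auxSpan Q goalVar ∨ IsDirectValue goalVar i (Q.termValue t) := by
  rcases t with c | k
  · exact .inr (.inl ⟨c, rfl⟩)
  · have hk : k < i := Q.lt_of_var_mem_args hi ht
    by_cases hz : ∃ z, goalVar z = k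
    · obtain ⟨z, rfl⟩ := hz
      exact .inr (.inr ⟨z, hk, hgoal.value_eq z⟩)
    · have hk : k ∈ auxVars Q goalVar := by
        simpa [auxVars, hk.trans hi] using hz
      exact .inl (Submodule.subset_span (mem_image_of_mem Q.value hk))

/-- By parity, the two arguments cannot both be direct. -/
lemma exists_goal_add_mem_auxSpan (hgoal : ComputesGoals Q goalVar) {z : ModifEdge G}
    (hz : (Q.args (goalVar z)).length = 2) :
    ∃ v, (v = 0 ∨ IsDirectValue goalVar (goalVar z) v) ∧ z.goal + v ∈ auxSpan Q goalVar := by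
  obtain ⟨t, t', hargs⟩ := List.length_eq_two.1 hz
  have hval : z.goal = Q.termValue t + Q.termValue t' := by
    rw [← hgoal.value_eq z, Q.value_eq_sum (hgoal.lt_length z), hargs]
    exact List.sum_pair
  rcases hgoal.termValue_mem_auxSpan_or (hgoal.lt_length z) (t := t) (by simp [hargs])
    with ht | ht <;>
  rcases hgoal.termValue_mem_auxSpan_or (hgoal.lt_length z) (t := t') (by simp [hargs])
    with ht' | ht'
  · exact ⟨0, .inl rfl, by rw [add_zero, hval]; exact add_mem ht ht'⟩
  · refine ⟨Q.termValue t', .inr ht', ?_⟩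
    rwa [hval, add_assoc, ZModModule.add_self, add_zero]
  · refine ⟨Q.termValue t, .inr ht, ?_⟩
    rwa [hval, add_right_comm, ZModModule.add_self, zero_add]
  · have hparity := z.parity_goal
    rw [hval, map_add, ht.parity_eq_one, ht'.parity_eq_one, ZModModule.add_self] at hparity
    exact absurd hparity zero_ne_one

lemma card_binary_local_le (hgoal : ComputesGoals Q goalVar) (b : Bool) :
    #{a : N | (Q.args (goalVar (localEdge G b a))).length = 2} ≤ #(auxVars Q goalVar) := by
  set B : Finset N := {a | (Q.args (goalVar (localEdge G b a))).length = 2}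
  choose v hv hspan using fun a : B =>
    hgoal.exists_goal_add_mem_auxSpan (z := localEdge G b a) (mem_filter.1 a.2).2
  have hcard := linearIndependent_le_span_aux' _ (linearIndependent_localGoal_add b hv) _
    (Set.range_subset_iff.2 hspan)
  simp only [Fintype.card_coe, SetLike.coe_sort_coe] at hcard
  exact hcard.trans card_image_le

lemma four_mul_card_le_sum_local (hgoal : ComputesGoals Q goalVar) (b : Bool) :
    4 * Fintype.card N ≤
      ∑ a, ((Q.args (goalVar (localEdge G b a))).length + 1) + #(auxVars Q goalVar) := by
  have harity (a : N) : 4 ≤ (Q.args (goalVar (localEdge G b a))).length + 1 +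
      if (Q.args (goalVar (localEdge G b a))).length = 2 then 1 else 0 := by
    have := Q.two_le_length_args (hgoal.lt_length (localEdge G b a))
    split_ifs <;> omega
  have hsum := sum_le_sum fun a (_ : a ∈ univ) => harity a
  rw [sum_const, card_univ, smul_eq_mul, mul_comm, sum_add_distrib, ← card_filter] at hsum
  exact hsum.trans (Nat.add_le_add_left (hgoal.card_binary_local_le b) _)

lemma sum_range_eq (hgoal : ComputesGoals Q goalVar) (f : ℕ → ℕ) :
    ∑ i ∈ range Q.stmts.length, f i =
      ∑ i ∈ auxVars Q goalVar, f i + (∑ e, f (goalVar (.inl e)) +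
        (∑ a, f (goalVar (localEdge G false a)) + ∑ a, f (goalVar (localEdge G true a)))) := by
  have hsub : univ.image goalVar ⊆ range Q.stmts.length :=
    image_subset_iff.2 fun z _ => mem_range.2 (hgoal.lt_length z)
  rw [auxVars, ← sum_sdiff hsub, sum_image hgoal.injective.injOn, Fintype.sum_sum_type,
    Fintype.sum_prod_type, Fintype.sum_bool, add_comm (∑ a, f (goalVar (localEdge G false a)))]

end ComputesGoals

end GoalVariables

section LowerBound

open Finset ModifEdge

variable {N : Type} {G : SimpleGraph N}

/-- The renaming contracting all constants other than the nodes of `G` to a single point. -/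
def contractToNodes : Const N → Option N
  | .node a => some a
  | _ => none

/-- The loss charged to each statement: `n - 2` for the goal of an edge of `G`, `0` for the goal of
a local edge, and `n - 1` for an auxiliary variable, where `n` is the number of arguments. -/
noncomputable def statementLoss (Q : MultiSLP (Const N)) (goalVar : ModifEdge G → ℕ) : ℕ → ℕ :=
  Function.extend goalVar (Sum.elim (fun e => (Q.args (goalVar (.inl e))).length - 2) 0)
    fun i => (Q.args i).length - 1

variable [DecidableEq N] {Q : MultiSLP (Const N)} {goalVar : ModifEdge G → ℕ}

section StatementCollapse

variable [Finite N]

lemma push_goal_eq {D : Type} [Finite D] [DecidableEq D] (f : Const N → D) {z : ModifEdge G}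
    {x y : Const N} (h : z.ends = s(x, y)) :
    push f z.goal = eConst (f .rho) + eConst (f x) + eConst (f y) := by
  rw [goal_eq h, map_add, map_add, push_eConst, push_eConst, push_eConst]

lemma isMonomial_push_goal_localEdge (b : Bool) (a : N) :
    IsMonomial (push contractToNodes (localEdge G b a).goal) := by
  have hlocal : contractToNodes (localNode b a) = none := by
    cases b <;> rfl
  have hrho : contractToNodes (.rho : Const N) = none := rfl
  rw [push_goal_eq _ rfl, hlocal, hrho, add_right_comm, ZModModule.add_self, zero_add]
  exact isMonomial_eConst _

namespace ComputesGoals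

lemma collapsible_push_value (hgoal : ComputesGoals Q goalVar) {i : ℕ}
    (hi : i < Q.stmts.length) (h : Option N → Option N)
    (hargs : ∀ t ∈ Q.args i, IsMonomial (push (h ∘ contractToNodes) (Q.termValue t))) :
    Collapsible (push (h ∘ contractToNodes) (Q.value i)) (statementLoss Q goalVar i) := by
  set l := (Q.args i).map fun t => push (h ∘ contractToNodes) (Q.termValue t) with hl
  have hmono : ∀ v ∈ l, IsMonomial v := List.forall_mem_map.2 hargs
  have hlen : l.length = (Q.args i).length := List.length_map _
  have htwo : 2 ≤ l.length := hlen ▸ Q.two_le_length_args hi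
  have hsum : push (h ∘ contractToNodes) (Q.value i) = l.sum := by
    rw [Q.value_eq_sum hi, map_list_sum, List.map_map, hl]
    rfl
  by_cases hz : ∃ z, goalVar z = i
  · obtain ⟨z, rfl⟩ := hz
    rw [statementLoss, hgoal.injective.extend_apply]
    rcases z with e | ⟨b, a⟩
    · obtain ⟨x, y, hends⟩ : ∃ x y, ends (.inl e : ModifEdge G) = s(x, y) := Sym2.exists.1 ⟨_, rfl⟩
      have hxy := push_goal_eq (h ∘ contractToNodes) hends
      rw [← hgoal.value_eq, hsum] at hxy
      rw [Sum.elim_inl, hsum, ← hlen]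
      exact collapsible_sum_eq_triple htwo hmono hxy
    · rw [hgoal.value_eq, push_comp]
      exact ((isMonomial_push_goal_localEdge b a).push h).collapsible _
  · rw [statementLoss, Function.extend_apply' _ _ _ hz, hsum, ← hlen]
    exact collapsible_sum (List.ne_nil_of_length_pos (by omega)) hmono

end ComputesGoals

end StatementCollapse

namespace ComputesGoals

variable [Fintype N]

lemma tau_le_sum_statementLoss (hgoal : ComputesGoals Q goalVar) :
    tau G ≤ ∑ i ∈ range Q.stmts.length, statementLoss Q goalVar i := by
  obtain ⟨h, hloss, hmono⟩ := Q.exists_lossLE_isMonomial_push_value contractToNodes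
    (fun i hi h hargs => hgoal.collapsible_push_value hi h hargs) le_rfl
  refine tau_le_of_lossLE hloss fun a b hab => ?_
  have hedge := hmono _ (hgoal.lt_length (.inl ⟨s(a, b), hab⟩))
  rw [hgoal.value_eq, push_goal_eq _ rfl] at hedge
  exact eq_or_eq_or_eq_of_isMonomial hedge

variable [DecidableRel G.Adj]

lemma tau_le_sum_arity (hgoal : ComputesGoals Q goalVar) :
    tau G ≤ ∑ i ∈ auxVars Q goalVar, ((Q.args i).length - 1) +
      ∑ e, ((Q.args (goalVar (.inl e))).length - 2) := by
  have haux : ∀ i ∈ auxVars Q goalVar, statementLoss Q goalVar i = (Q.args i).length - 1 :=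
    fun i hi => Function.extend_apply' _ _ _ fun ⟨z, hz⟩ =>
      (mem_sdiff.1 hi).2 (hz ▸ mem_image_of_mem _ (mem_univ z))
  have htau := hgoal.tau_le_sum_statementLoss
  rw [hgoal.sum_range_eq, sum_congr rfl haux] at htau
  simpa [statementLoss, hgoal.injective.extend_apply] using htau

lemma le_costM (hgoal : ComputesGoals Q goalVar) :
    3 * #G.edgeFinset + 8 * Fintype.card N + tau G ≤ Q.costM := by
  have haux : ∑ i ∈ auxVars Q goalVar, ((Q.args i).length + 1) =
      ∑ i ∈ auxVars Q goalVar, ((Q.args i).length - 1) + 2 * #(auxVars Q goalVar) := by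
    rw [mul_comm, ← smul_eq_mul, ← sum_const, ← sum_add_distrib]
    refine sum_congr rfl fun i hi => ?_
    have := Q.two_le_length_args (mem_range.1 (mem_sdiff.1 hi).1)
    omega
  have hedges : ∑ e, ((Q.args (goalVar (.inl e))).length + 1) =
      ∑ e, ((Q.args (goalVar (.inl e))).length - 2) + 3 * #G.edgeFinset := by
    rw [SimpleGraph.edgeFinset_card, ← card_univ, mul_comm, ← smul_eq_mul, ← sum_const,
      ← sum_add_distrib]
    refine sum_congr rfl fun e _ => ?_
    have := Q.two_le_length_args (hgoal.lt_length (.inl e))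
    omega
  have hlam := hgoal.four_mul_card_le_sum_local false
  have hmu := hgoal.four_mul_card_le_sum_local true
  have htau := hgoal.tau_le_sum_arity
  rw [Q.costM_eq_sum, hgoal.sum_range_eq]
  omega

end ComputesGoals

end LowerBound

lemma card_edgeFinset_eq_length {N : Type} (G : SimpleGraph N)
    [Fintype G.edgeSet] {L : List (N × N)} (hnodup : (L.map fun p => s(p.1, p.2)).Nodup)
    (hadj : ∀ p ∈ L, G.Adj p.1 p.2)
    (hall : ∀ a b, G.Adj a b → s(a, b) ∈ L.map fun p => s(p.1, p.2)) :
    G.edgeFinset.card = L.length := by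
  classical
  have hedges : G.edgeFinset = (L.map fun p => s(p.1, p.2)).toFinset := by
    ext e
    rw [SimpleGraph.mem_edgeFinset, List.mem_toFinset]
    refine ⟨fun he => ?_, fun he => ?_⟩
    · induction e using Sym2.ind with
      | _ a b => exact hall a b he
    · obtain ⟨p, hp, rfl⟩ := List.mem_map.1 he
      exact hadj p hp
  rw [hedges, List.toFinset_card_of_nodup hnodup, List.length_map]

/-- **The minimum memory-access cost of `P_G` computes the vertex-cover number.**
Let `G` be a finite simple graph with node set `N` and edge set `E` (enumerated
without repetition by `L`; `nodes` enumerates `N`).  The minimum of `#_M(Q)` over all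
MultiSLPs `Q` equivalent to `P_G` equals `3·|E| + 8·|N| + τ(G)`.  Consequently, for a
`#_M`-minimum MultiSLP `Q` equivalent to `P_G`, the number
`k = #_M(Q) − 3·|E| − 8·|N|` is the size of a smallest vertex cover of `G`. -/
theorem multislp_min_cost_eq_tau {N : Type} [Fintype N] [DecidableEq N]
    (G : SimpleGraph N) [DecidableRel G.Adj]
    (L : List (N × N)) (nodes : List N)
    (hnodesN : nodes.Nodup) (hnodesA : ∀ a : N, a ∈ nodes)
    (hLN : (L.map fun p => s(p.1, p.2)).Nodup)
    (hLadj : ∀ p ∈ L, G.Adj p.1 p.2)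
    (hLall : ∀ a b : N, G.Adj a b → s(a, b) ∈ L.map fun p => s(p.1, p.2)) :
    sInf {m | ∃ Q : MultiSLP (Const N), Q.result = targetValues L nodes ∧ Q.costM = m} =
      3 * G.edgeFinset.card + 8 * Fintype.card N + tau G ∧
    ∀ Q : MultiSLP (Const N), Q.result = targetValues L nodes →
      (∀ Q' : MultiSLP (Const N), Q'.result = targetValues L nodes → Q.costM ≤ Q'.costM) →
      Q.costM - (3 * G.edgeFinset.card + 8 * Fintype.card N) = tau G := by
  obtain ⟨Q₀, hQ₀, hcost⟩ := exists_costM_eq G hLadj hnodesN hnodesA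
  rw [← card_edgeFinset_eq_length G hLN hLadj hLall] at hcost
  have hlower : ∀ Q : MultiSLP (Const N), Q.result = targetValues L nodes →
      3 * G.edgeFinset.card + 8 * Fintype.card N + tau G ≤ Q.costM := fun Q hQ =>
    let ⟨_, hgoal⟩ := exists_computesGoals hnodesA hLall hQ
    hgoal.le_costM
  refine ⟨le_antisymm (Nat.sInf_le ⟨Q₀, hQ₀, hcost⟩) (le_csInf ⟨_, Q₀, hQ₀, rfl⟩ ?_), ?_⟩
  · rintro _ ⟨Q, hQ, rfl⟩
    exact hlower Q hQ
  · intro Q hQ hmin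
    have hQcost := ((hmin Q₀ hQ₀).trans hcost.le).antisymm (hlower Q hQ)
    rw [hQcost, Nat.add_sub_cancel_left]
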